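/- Let 0 < α < 1, ν > 0 and t > 0, and let f : ℝ^d → ℝ be bounded with [f]_α < ∞. Then for every x ∈ ℝ^d, the function s ↦ ((Δg_{ν(t-s)}) * f)(x) is integrable on (0,t) and ν ∫_0^t ((Δg_{ν(t-s)}) * f)(x) ds = (g_{νt} * f)(x) - f(x). -/

import Mathlib

/-!
Write `F r = (g_r * f)(x)` and `L r = (Δg_r * f)(x)`. The kernel solves the heat equation, and
differentiation under the integral sign gives `F' = L` on `(0, ∞)`, so `s ↦ -F (ν (t - s))` is a
primitive of `s ↦ ν L (ν (t - s))` on `(0, t)`. The identity is then the fundamental theorem of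
calculus, and the only difficulty is the endpoint `s = t`, where the kernel is singular.

There the Hölder condition enters. Since `∫ g_r = 1` for every `r`, also `∫ Δg_r = 0`, so `f (x - y)`
may be replaced by `f (x - y) - f x`, which is at most `M ‖y‖ ^ α`. As
`‖y‖ ^ α ≤ r ^ (α / 2) (1 + ‖y‖² / r)`, and `(1 + ‖y‖² / r)² g_r ≤ C g_{2r}` pointwise
(`heatKer_weight_le`), integration gives `|L r| ≤ C r ^ (α / 2 - 1)`, which is integrable at `0`, and
`|F r - f x| ≤ C r ^ (α / 2)`, which tends to `0` (both from `abs_integral_mul_le`).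
-/

open MeasureTheory Real

/-- The Gaussian heat kernel `g_{s}(x) = (4πs)^{-d/2} exp(-|x|²/(4s))` on `ℝ^d`. -/
noncomputable def heatKer (d : ℕ) (s : ℝ) (x : EuclideanSpace ℝ (Fin d)) : ℝ :=
  (4 * Real.pi * s) ^ (-(d : ℝ) / 2) * Real.exp (-‖x‖ ^ 2 / (4 * s))

/-- The Laplacian `Δg_s` of the heat kernel. -/
noncomputable def lapKer (d : ℕ) (s : ℝ) (x : EuclideanSpace ℝ (Fin d)) : ℝ :=
  ∑ i : Fin d, fderiv ℝ (fun y => fderiv ℝ (heatKer d s) y (EuclideanSpace.single i 1)) x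
    (EuclideanSpace.single i 1)

section

/-! ### The heat kernel: derivatives and mass -/

variable {d : ℕ}

lemma heatKer_pos {r : ℝ} (hr : 0 < r) (y : EuclideanSpace ℝ (Fin d)) : 0 < heatKer d r y := by
  unfold heatKer; positivity

lemma continuous_heatKer (r : ℝ) : Continuous (heatKer d r) := by
  unfold heatKer; fun_prop

lemma hasFDerivAt_heatKer (r : ℝ) (y : EuclideanSpace ℝ (Fin d)) :
    HasFDerivAt (heatKer d r) ((heatKer d r y * (-(1 / (2 * r)))) • innerSL ℝ y) y := by
  have h : HasFDerivAt (fun y : EuclideanSpace ℝ (Fin d) => ‖y‖ ^ 2) (2 • innerSL ℝ y) y :=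
    (hasStrictFDerivAt_norm_sq y).hasFDerivAt
  have h2 := (((h.neg.mul_const ((4 * r)⁻¹)).exp).const_mul
    ((4 * Real.pi * r) ^ (-(d : ℝ) / 2)))
  refine HasFDerivAt.congr_fderiv (h2.congr_of_eventuallyEq (.of_forall fun z => ?_)) ?_
  · simp [heatKer, div_eq_mul_inv]
  · ext v
    simp [heatKer, div_eq_mul_inv]
    ring

/-- For positive times the Laplacian is the Gaussian times a quadratic weight. -/
lemma lapKer_eq {r : ℝ} (hr : 0 < r) (y : EuclideanSpace ℝ (Fin d)) :
    lapKer d r y = (‖y‖ ^ 2 / (4 * r ^ 2) - d / (2 * r)) * heatKer d r y := by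
  have key : ∀ i : Fin d,
      fderiv ℝ (fun y => fderiv ℝ (heatKer d r) y (EuclideanSpace.single i 1)) y
        (EuclideanSpace.single i 1) =
      ((y i) ^ 2 / (4 * r ^ 2) - 1 / (2 * r)) * heatKer d r y := by
    intro i
    have e : (fun y => fderiv ℝ (heatKer d r) y (EuclideanSpace.single i 1)) =
        fun y => heatKer d r y * (y i * (-(1 / (2 * r)))) := by
      funext z
      rw [(hasFDerivAt_heatKer r z).fderiv]
      simp [EuclideanSpace.inner_single_right]
      ring
    have hp : HasFDerivAt (fun z : EuclideanSpace ℝ (Fin d) => z i)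
        (EuclideanSpace.proj i : EuclideanSpace ℝ (Fin d) →L[ℝ] ℝ) y :=
      (EuclideanSpace.proj i : EuclideanSpace ℝ (Fin d) →L[ℝ] ℝ).hasFDerivAt
    have h := ((hasFDerivAt_heatKer r y).mul (hp.mul_const (-(1 / (2 * r))))).fderiv
    rw [Pi.mul_def] at h
    rw [e, h]
    simp [EuclideanSpace.inner_single_right]
    field_simp
    ring
  unfold lapKer
  rw [Finset.sum_congr rfl fun i _ => key i, ← Finset.sum_mul, Finset.sum_sub_distrib,
    ← Finset.sum_div, EuclideanSpace.real_norm_sq_eq]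
  simp
  left
  ring

/-- The heat equation for the kernel. -/
lemma hasDerivAt_heatKer {r : ℝ} (hr : 0 < r) (y : EuclideanSpace ℝ (Fin d)) :
    HasDerivAt (fun s => heatKer d s y) (lapKer d r y) r := by
  have h1 : HasDerivAt (fun s : ℝ => 4 * Real.pi * s) (4 * Real.pi) r := by
    simpa using (hasDerivAt_id r).const_mul (4 * Real.pi)
  have h2 := h1.rpow_const (p := -(d : ℝ) / 2) (Or.inl (by positivity))
  have h3 : HasDerivAt (fun s : ℝ => 4 * s) 4 r := by
    simpa using (hasDerivAt_id r).const_mul (4 : ℝ)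
  have h4 := ((hasDerivAt_const r (-‖y‖ ^ 2)).div h3 (by positivity)).exp
  refine (h2.mul h4).congr_deriv ?_
  rw [lapKer_eq hr, heatKer, Real.rpow_sub_one (by positivity)]
  simp only [Pi.div_apply]
  field_simp
  ring

lemma integrable_gaussian {b : ℝ} (hb : 0 < b) :
    Integrable (fun y : EuclideanSpace ℝ (Fin d) => Real.exp (-b * ‖y‖ ^ 2)) := by
  -- The Bochner integral is nonzero, and it would vanish for a non-integrable function.
  by_contra h
  have h1 := GaussianFourier.integral_rexp_neg_mul_sq_norm
    (V := EuclideanSpace ℝ (Fin d)) hb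
  rw [integral_undef h] at h1
  have : 0 < (Real.pi / b) ^ ((Module.finrank ℝ (EuclideanSpace ℝ (Fin d)) : ℝ) / 2) := by
    positivity
  linarith

lemma heatKer_eq (r : ℝ) : heatKer d r = fun y => (4 * Real.pi * r) ^ (-(d : ℝ) / 2) *
    Real.exp (-(1 / (4 * r)) * ‖y‖ ^ 2) := by
  funext y
  rw [heatKer]
  congr 2
  ring

lemma integrable_heatKer {r : ℝ} (hr : 0 < r) : Integrable (heatKer d r) := by
  rw [heatKer_eq]
  exact (integrable_gaussian (by positivity)).const_mul _

lemma integral_heatKer {r : ℝ} (hr : 0 < r) : ∫ y, heatKer d r y = 1 := by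
  rw [heatKer_eq, integral_const_mul, GaussianFourier.integral_rexp_neg_mul_sq_norm (by positivity),
    finrank_euclideanSpace_fin, show Real.pi / (1 / (4 * r)) = 4 * Real.pi * r by field_simp,
    ← Real.rpow_add (by positivity)]
  simp [neg_div]

/-! ### Pointwise bounds by the kernel at a later time -/

/-- Polynomial weights in `‖y‖² / r` are absorbed by doubling the time. -/
lemma heatKer_weight_le {r : ℝ} (hr : 0 < r) (y : EuclideanSpace ℝ (Fin d)) :
    (1 + ‖y‖ ^ 2 / r) ^ 2 * heatKer d r y ≤
      256 * 2 ^ ((d : ℝ) / 2) * heatKer d (2 * r) y := by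
  set u := ‖y‖ ^ 2 / r with hu
  have hu0 : 0 ≤ u := by positivity
  have e1 : 1 + u ≤ 16 * Real.exp (u / 16) := by
    have := Real.add_one_le_exp (u / 16)
    linarith
  have e2 : (1 + u) ^ 2 ≤ 256 * Real.exp (u / 8) := by
    calc (1 + u) ^ 2 ≤ (16 * Real.exp (u / 16)) ^ 2 := by gcongr
      _ = 256 * (Real.exp (u / 16) * Real.exp (u / 16)) := by ring
      _ = 256 * Real.exp (u / 8) := by rw [← Real.exp_add]; ring_nf
  have e3 : 2 ^ ((d : ℝ) / 2) * (4 * Real.pi * (2 * r)) ^ (-(d : ℝ) / 2) =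
      (4 * Real.pi * r) ^ (-(d : ℝ) / 2) := by
    rw [show 4 * Real.pi * (2 * r) = 2 * (4 * Real.pi * r) by ring,
      Real.mul_rpow (by norm_num) (by positivity), ← mul_assoc, ← Real.rpow_add (by norm_num)]
    simp [neg_div]
  have e4 : -‖y‖ ^ 2 / (4 * (2 * r)) = u / 8 + -‖y‖ ^ 2 / (4 * r) := by
    rw [hu]; field_simp; ring
  calc (1 + u) ^ 2 * heatKer d r y ≤ 256 * Real.exp (u / 8) * heatKer d r y :=
        mul_le_mul_of_nonneg_right e2 (heatKer_pos hr y).le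
    _ = _ := by
        rw [heatKer, heatKer, ← e3, e4, Real.exp_add]; ring

lemma heatKer_weight_le' {r : ℝ} (hr : 0 < r) (y : EuclideanSpace ℝ (Fin d)) :
    (1 + ‖y‖ ^ 2 / r) * heatKer d r y ≤
      256 * 2 ^ ((d : ℝ) / 2) * heatKer d (2 * r) y := by
  refine le_trans ?_ (heatKer_weight_le hr y)
  refine mul_le_mul_of_nonneg_right ?_ (heatKer_pos hr y).le
  have : 0 ≤ ‖y‖ ^ 2 / r := by positivity
  nlinarith

lemma lapKer_weight_le {r : ℝ} (hr : 0 < r) (y : EuclideanSpace ℝ (Fin d)) :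
    (1 + ‖y‖ ^ 2 / r) * |lapKer d r y| ≤
      (1 + d) * (256 * 2 ^ ((d : ℝ) / 2)) / r * heatKer d (2 * r) y := by
  have hu0 : 0 ≤ ‖y‖ ^ 2 / r := by positivity
  have h1 : |‖y‖ ^ 2 / (4 * r ^ 2) - d / (2 * r)| ≤ (1 + d) / r * (1 + ‖y‖ ^ 2 / r) := by
    have e : ‖y‖ ^ 2 / (4 * r ^ 2) - d / (2 * r) = (‖y‖ ^ 2 / r / 4 - d / 2) / r := by
      field_simp
    rw [e, abs_div, abs_of_pos hr, div_mul_eq_mul_div]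
    gcongr
    have hd : (0 : ℝ) ≤ d := by positivity
    rw [abs_le]
    constructor <;> nlinarith [mul_nonneg hd hu0]
  rw [lapKer_eq hr, abs_mul, abs_of_pos (heatKer_pos hr y)]
  calc _ ≤ (1 + ‖y‖ ^ 2 / r) * ((1 + d) / r * (1 + ‖y‖ ^ 2 / r) * heatKer d r y) := by
        gcongr; exact (heatKer_pos hr y).le
    _ = (1 + d) / r * ((1 + ‖y‖ ^ 2 / r) ^ 2 * heatKer d r y) := by ring
    _ ≤ (1 + d) / r * (256 * 2 ^ ((d : ℝ) / 2) * heatKer d (2 * r) y) := by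
        exact mul_le_mul_of_nonneg_left (heatKer_weight_le hr y) (by positivity)
    _ = _ := by ring

lemma abs_lapKer_le {r : ℝ} (hr : 0 < r) (y : EuclideanSpace ℝ (Fin d)) :
    |lapKer d r y| ≤
      (1 + d) * (256 * 2 ^ ((d : ℝ) / 2)) / r * heatKer d (2 * r) y := by
  refine le_trans ?_ (lapKer_weight_le hr y)
  have : 0 ≤ ‖y‖ ^ 2 / r := by positivity
  nlinarith [abs_nonneg (lapKer d r y)]

lemma continuous_lapKer {r : ℝ} (hr : 0 < r) : Continuous (lapKer d r) := by
  have : lapKer d r = fun y => (‖y‖ ^ 2 / (4 * r ^ 2) - d / (2 * r)) * heatKer d r y :=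
    funext (lapKer_eq hr)
  rw [this]
  have := continuous_heatKer (d := d) r
  fun_prop

lemma integrable_lapKer {r : ℝ} (hr : 0 < r) : Integrable (lapKer d r) :=
  ((integrable_heatKer (d := d) (r := 2 * r) (by positivity)).const_mul _).mono'
    (continuous_lapKer hr).aestronglyMeasurable (.of_forall fun y => abs_lapKer_le hr y)

/-- On the parabolic scale `‖y‖ ~ √r`, the power `‖y‖ ^ α` costs a factor `r ^ (α / 2)`. -/
lemma norm_rpow_le {α r : ℝ} (hα : 0 < α) (hα1 : α < 1) (hr : 0 < r)
    (y : EuclideanSpace ℝ (Fin d)) : ‖y‖ ^ α ≤ r ^ (α / 2) * (1 + ‖y‖ ^ 2 / r) := by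
  set u := ‖y‖ ^ 2 / r with hu
  have hu0 : 0 ≤ u := by positivity
  have h1 : ‖y‖ ^ α = r ^ (α / 2) * u ^ (α / 2) := by
    rw [← Real.mul_rpow hr.le hu0, hu, mul_div_cancel₀ _ hr.ne', ← Real.rpow_natCast,
      ← Real.rpow_mul (norm_nonneg y)]
    congr 1; push_cast; ring
  rw [h1]
  gcongr
  calc u ^ (α / 2) ≤ (1 + u) ^ (α / 2) := by gcongr; linarith
    _ ≤ (1 + u) ^ (1 : ℝ) := by gcongr <;> linarith
    _ = 1 + u := Real.rpow_one _

/-! ### Integrals against the kernel -/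

/-- Differentiation of the heat semigroup under the integral sign, against a bounded function. -/
lemma hasDerivAt_integral_heatKer {r B : ℝ} (hr : 0 < r) {h : EuclideanSpace ℝ (Fin d) → ℝ}
    (hm : Measurable h) (hB : ∀ y, |h y| ≤ B) :
    HasDerivAt (fun s => ∫ y, heatKer d s y * h y) (∫ y, lapKer d r y * h y) r := by
  have hB0 : 0 ≤ B := (abs_nonneg _).trans (hB 0)
  have hs : Metric.ball r (r / 2) ∈ nhds r := Metric.ball_mem_nhds r (by positivity)
  have hmem : ∀ s ∈ Metric.ball r (r / 2), r / 2 < s ∧ s < 3 / 2 * r := by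
    intro s hs
    rw [Metric.mem_ball, Real.dist_eq, abs_lt] at hs
    constructor <;> linarith
  refine (hasDerivAt_integral_of_dominated_loc_of_deriv_le
    (bound := fun y => (1 + d) * (256 * 2 ^ ((d : ℝ) / 2)) / (r / 2) *
      ((4 * Real.pi * r) ^ (-(d : ℝ) / 2) * Real.exp (-(1 / (12 * r)) * ‖y‖ ^ 2)) * B)
    (F' := fun s y => lapKer d s y * h y) hs
    (.of_forall fun s => ?_) ?_ ?_ ?_ ?_ ?_).2
  · exact ((continuous_heatKer s).measurable.mul hm).aestronglyMeasurable
  · exact (integrable_heatKer hr).mul_bdd hm.aestronglyMeasurable (.of_forall hB)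
  · exact ((continuous_lapKer hr).measurable.mul hm).aestronglyMeasurable
  · refine .of_forall fun y s hs => ?_
    obtain ⟨h1, h2⟩ := hmem s hs
    have hs0 : 0 < s := by linarith
    rw [Real.norm_eq_abs, abs_mul]
    refine mul_le_mul ?_ (hB y) (abs_nonneg _) (by positivity)
    refine (abs_lapKer_le hs0 y).trans ?_
    refine mul_le_mul ?_ ?_ (heatKer_pos (by positivity) y).le (by positivity)
    · gcongr
    · rw [heatKer]
      refine mul_le_mul ?_ ?_ (by positivity) (by positivity)
      · refine Real.rpow_le_rpow_of_nonpos (by positivity) ?_ ?_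
        · nlinarith [Real.pi_pos]
        · have : (0 : ℝ) ≤ d := by positivity
          linarith
      · rw [Real.exp_le_exp, neg_div, neg_mul, neg_le_neg_iff, one_div_mul_eq_div]
        exact div_le_div_of_nonneg_left (by positivity) (by positivity) (by linarith)
  · exact (((integrable_gaussian (by positivity)).const_mul _).const_mul _).mul_const _
  · refine .of_forall fun y s hs => ?_
    exact (hasDerivAt_heatKer (by linarith [(hmem s hs).1]) y).mul_const _

lemma integral_lapKer {r : ℝ} (hr : 0 < r) : ∫ y, lapKer d r y = 0 := by
  have h1 := hasDerivAt_integral_heatKer (d := d) hr (h := fun _ => 1) (B := 1)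
    measurable_const (by simp)
  simp only [mul_one] at h1
  have h2 : HasDerivAt (fun s => ∫ y, heatKer d s y) 0 r := by
    refine (hasDerivAt_const r (1 : ℝ)).congr_of_eventuallyEq ?_
    filter_upwards [lt_mem_nhds hr] with s hs using integral_heatKer hs
  exact h1.unique h2

/-- A kernel with a quadratic weight bound, tested against an increment controlled by `‖y‖ ^ α`,
gains the factor `r ^ (α / 2)`. -/
lemma abs_integral_mul_le {α r M A : ℝ} (hα : 0 < α) (hα1 : α < 1) (hr : 0 < r) (hM : 0 ≤ M)
    {k h : EuclideanSpace ℝ (Fin d) → ℝ} (hh : ∀ y, |h y| ≤ M * ‖y‖ ^ α)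
    (hk : ∀ y, (1 + ‖y‖ ^ 2 / r) * |k y| ≤ A * heatKer d (2 * r) y) :
    |∫ y, k y * h y| ≤ M * A * r ^ (α / 2) := by
  have hi := (integrable_heatKer (d := d) (r := 2 * r) (by positivity)).const_mul
    (M * A * r ^ (α / 2))
  have := norm_integral_le_of_norm_le (f := fun y => k y * h y) hi (.of_forall fun y => ?_)
  · rwa [integral_const_mul, integral_heatKer (by positivity), mul_one] at this
  · rw [Real.norm_eq_abs, abs_mul]
    calc |k y| * |h y| ≤ |k y| * (M * (r ^ (α / 2) * (1 + ‖y‖ ^ 2 / r))) := by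
          gcongr
          refine (hh y).trans ?_
          gcongr
          exact norm_rpow_le hα hα1 hr y
      _ = M * r ^ (α / 2) * ((1 + ‖y‖ ^ 2 / r) * |k y|) := by ring
      _ ≤ M * r ^ (α / 2) * (A * heatKer d (2 * r) y) := by
          exact mul_le_mul_of_nonneg_left (hk y) (by positivity)
      _ = _ := by ring

end

/-! ### The fundamental theorem of calculus in time -/

/-- Let `0 < α < 1`, `ν > 0`, `t > 0`, and let `f : ℝ^d → ℝ` be bounded with `[f]_α < ∞`. Then
for every `x`, `s ↦ ((Δg_{ν(t-s)}) * f)(x)` is integrable on `(0,t)` and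
`ν ∫_0^t ((Δg_{ν(t-s)}) * f)(x) ds = (g_{νt} * f)(x) - f(x)`. -/
theorem lapKer_time_integral_identity (d : ℕ) (α ν t : ℝ) (hα : 0 < α) (hα1 : α < 1)
    (hν : 0 < ν) (ht : 0 < t) (f : EuclideanSpace ℝ (Fin d) → ℝ) (hf : Measurable f)
    (hbdd : ∃ B, ∀ x, |f x| ≤ B) (hHol : ∃ M, ∀ x y, |f x - f y| ≤ M * ‖x - y‖ ^ α) :
    ∀ x : EuclideanSpace ℝ (Fin d),
      IntegrableOn (fun s => ∫ y, lapKer d (ν * (t - s)) y * f (x - y)) (Set.Ioo 0 t) volume ∧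
      ν * ∫ s in Set.Ioo (0 : ℝ) t, ∫ y, lapKer d (ν * (t - s)) y * f (x - y) =
        (∫ y, heatKer d (ν * t) y * f (x - y)) - f x := by
  intro x
  obtain ⟨B, hB⟩ := hbdd
  obtain ⟨M, hM⟩ := hHol
  set h : EuclideanSpace ℝ (Fin d) → ℝ := fun y => f (x - y) with hh
  have hm : Measurable h := hf.comp (measurable_const.sub measurable_id)
  have hhB : ∀ y, |h y| ≤ B := fun y => hB _
  have hinc : ∀ y, |h y - f x| ≤ |M| * ‖y‖ ^ α := by
    intro y
    have := hM (x - y) x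
    rw [show x - y - x = -y by abel, norm_neg] at this
    exact this.trans (by gcongr; exact le_abs_self M)
  set C : ℝ := 256 * 2 ^ ((d : ℝ) / 2) with hC
  set F : ℝ → ℝ := fun r => ∫ y, heatKer d r y * h y with hF
  set L : ℝ → ℝ := fun r => ∫ y, lapKer d r y * h y with hL
  have hder : ∀ r, 0 < r → HasDerivAt F (L r) r := fun r hr =>
    hasDerivAt_integral_heatKer hr hm hhB
  have hLb : ∀ r, 0 < r → |L r| ≤ |M| * ((1 + d) * C) * r ^ (α / 2 - 1) := by
    intro r hr
    have e : L r = ∫ y, lapKer d r y * (h y - f x) := by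
      simp only [mul_sub]
      rw [integral_sub ((integrable_lapKer hr).mul_bdd hm.aestronglyMeasurable (.of_forall hhB))
        ((integrable_lapKer hr).mul_const _), integral_mul_const, integral_lapKer hr]
      simp [hL]
    rw [e]
    refine (abs_integral_mul_le hα hα1 hr (abs_nonneg M) hinc (lapKer_weight_le hr)).trans
      (le_of_eq ?_)
    rw [Real.rpow_sub_one hr.ne']
    ring
  have hFb : ∀ r, 0 < r → |F r - f x| ≤ |M| * C * r ^ (α / 2) := by
    intro r hr
    have e : F r - f x = ∫ y, heatKer d r y * (h y - f x) := by
      simp only [mul_sub]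
      rw [integral_sub ((integrable_heatKer hr).mul_bdd hm.aestronglyMeasurable (.of_forall hhB))
        ((integrable_heatKer hr).mul_const _), integral_mul_const, integral_heatKer hr, one_mul]
    rw [e]
    refine abs_integral_mul_le hα hα1 hr (abs_nonneg M) hinc fun y => ?_
    rw [abs_of_pos (heatKer_pos hr y)]
    exact heatKer_weight_le' hr y
  have hder' : ∀ s ∈ Set.Ioo 0 t,
      HasDerivAt (fun s => -F (ν * (t - s))) (ν * L (ν * (t - s))) s := by
    intro s hs
    have h1 : HasDerivAt (fun s => ν * (t - s)) (-ν) s := by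
      simpa using ((hasDerivAt_id s).const_sub t).const_mul ν
    have h2 := (hder (ν * (t - s)) (mul_pos hν (sub_pos.2 hs.2))).comp s h1
    exact h2.neg.congr_deriv (by ring)
  have hint : IntegrableOn (fun s => L (ν * (t - s))) (Set.Ioo 0 t) volume := by
    have hdom : IntegrableOn (fun s => |M| * ((1 + d) * C) * (ν ^ (α / 2 - 1) *
        (t - s) ^ (α / 2 - 1))) (Set.Ioo 0 t) volume := by
      have h1 : IntervalIntegrable (fun s : ℝ => s ^ (α / 2 - 1)) volume 0 t :=
        intervalIntegral.intervalIntegrable_rpow' (by linarith)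
      have h2 := h1.comp_sub_left t
      simp only [sub_zero, sub_self] at h2
      have h3 := (intervalIntegrable_iff_integrableOn_Ioo_of_le ht.le).1 h2.symm
      exact (h3.const_mul _).const_mul _
    refine hdom.mono' ?_ ?_
    · -- Measurability is inherited from that of a derivative.
      have h1 : AEStronglyMeasurable (fun s => ν⁻¹ * deriv (fun s => -F (ν * (t - s))) s)
          (volume.restrict (Set.Ioo 0 t)) :=
        ((measurable_deriv _).const_mul _).aestronglyMeasurable
      refine h1.congr ?_
      filter_upwards [ae_restrict_mem measurableSet_Ioo] with s hs
      rw [(hder' s hs).deriv, inv_mul_cancel_left₀ hν.ne']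
    · filter_upwards [ae_restrict_mem measurableSet_Ioo] with s hs
      have hts : 0 < t - s := sub_pos.2 hs.2
      rw [← Real.mul_rpow hν.le hts.le]
      exact hLb _ (mul_pos hν hts)
  refine ⟨hint, ?_⟩
  have hlim0 : Filter.Tendsto (fun s => -F (ν * (t - s))) (nhdsWithin 0 (Set.Ioi 0))
      (nhds (-F (ν * t))) := by
    have hc : ContinuousAt (fun s => -F (ν * (t - s))) 0 := by
      have h1 : ContinuousAt F (ν * (t - 0)) := (hder _ (by simpa using mul_pos hν ht)).continuousAt
      exact (ContinuousAt.comp (f := fun s => ν * (t - s)) h1 (by fun_prop)).neg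
    have := hc.tendsto.mono_left (nhdsWithin_le_nhds (s := Set.Ioi 0))
    simpa using this
  have hlimt : Filter.Tendsto (fun s => -F (ν * (t - s))) (nhdsWithin t (Set.Iio t))
      (nhds (-f x)) := by
    refine Filter.Tendsto.neg ?_
    rw [tendsto_iff_norm_sub_tendsto_zero]
    have hz : Filter.Tendsto (fun s => |M| * C * (ν * (t - s)) ^ (α / 2))
        (nhdsWithin t (Set.Iio t)) (nhds 0) := by
      have hc : ContinuousAt (fun s => |M| * C * (ν * (t - s)) ^ (α / 2)) t := by
        refine continuousAt_const.mul (ContinuousAt.rpow_const (by fun_prop) (Or.inr (by linarith)))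
      have := hc.tendsto.mono_left (nhdsWithin_le_nhds (s := Set.Iio t))
      simpa [Real.zero_rpow (by positivity : α / 2 ≠ 0)] using this
    refine squeeze_zero' (.of_forall fun s => norm_nonneg _) ?_ hz
    filter_upwards [self_mem_nhdsWithin] with s hs
    exact hFb _ (mul_pos hν (sub_pos.2 hs))
  have hftc := intervalIntegral.integral_eq_sub_of_hasDerivAt_of_tendsto ht hder'
    ((intervalIntegrable_iff_integrableOn_Ioo_of_le ht.le).2 (hint.const_mul ν)) hlim0 hlimt
  rw [intervalIntegral.integral_const_mul, intervalIntegral.integral_of_le ht.le,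
    integral_Ioc_eq_integral_Ioo] at hftc
  rw [hftc]
  ring
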